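/- For every 0 < R ≤ 1 and every integer k ≥ 0 there exists a constant C = C(R, k) such that for all sufficiently small ε > 0, the C^k norm of ū_ε on B_R(0) (the supremum over B_R(0) of the absolute values of all partial derivatives of ū_ε of order at most k) is at most C·ε^{−k−2}. -/

import Mathlib

open Real Set Metric

/-- The Euclidean Laplacian of `u : ℝ² → ℝ`. -/
noncomputable def laplacian2 (u : EuclideanSpace ℝ (Fin 2) → ℝ)
    (x : EuclideanSpace ℝ (Fin 2)) : ℝ :=
  ∑ i : Fin 2,
    fderiv ℝ (fun y => fderiv ℝ u y (EuclideanSpace.single i 1)) x (EuclideanSpace.single i 1)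

/-- `u` is a solution of the Dirichlet problem
`Δu = ε⁻²·(exp u − |x|²·exp (−u))` in `B₁(0)`, `u = 0` on `∂B₁(0)`. -/
def IsDirichletSol (ε : ℝ) (u : EuclideanSpace ℝ (Fin 2) → ℝ) : Prop :=
  ContinuousOn u (closedBall 0 1) ∧
  ContDiffOn ℝ (⊤ : ℕ∞) u (ball 0 1) ∧
  (∀ x ∈ ball (0 : EuclideanSpace ℝ (Fin 2)) 1,
    laplacian2 u x = (ε ^ 2)⁻¹ * (Real.exp (u x) - ‖x‖ ^ 2 * Real.exp (-u x))) ∧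
  (∀ x ∈ sphere (0 : EuclideanSpace ℝ (Fin 2)) 1, u x = 0)

/-! By the comparison principle the solution is unique, hence invariant under reflections, so it is
radial. As `log |x|` solves the equation away from the origin, it also gives `log |x| ≤ u ≤ 0`.
Writing `u(x) = φ(t)` with `t = |x|²`, the equation becomes `4 (t φ')' = ε⁻² (e^φ - t e^{-φ})`,
which is singular at `t = 0`, and `φ` varies on the scale `λ(t) = ε √(ε² + t)`: by induction,
`|φ⁽ʲ⁾| ≤ (K / λ)ʲ` for `j ≥ 1`. When `t ≤ ε²` this follows by averaging
`(t^{j+1} φ⁽ʲ⁺¹⁾)' = t^j (t φ')⁽ʲ⁺¹⁾` from the origin; when `t ≥ ε²` one can divide by `t`, because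
`λ² ≤ 2 ε² t`. Composition with `x ↦ |x|²` then loses only a factor `ε⁻¹` per derivative, since
`|∇|x|²| = 2 |x| ≤ 2 λ / ε`. -/

open Filter Topology InnerProductSpace
open scoped ContDiff Laplacian

local notation "ℝ²" => EuclideanSpace ℝ (Fin 2)

section IteratedDeriv

variable {F : Type*} [NormedAddCommGroup F] [NormedSpace ℝ F]

theorem hasDerivAt_iteratedDeriv {f : ℝ → F} {t : ℝ} {n : ℕ} {N : ℕ∞ω}
    (hf : ContDiffAt ℝ N f t) (hn : n < N) :
    HasDerivAt (iteratedDeriv n f) (iteratedDeriv (n + 1) f t) t := by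
  rw [iteratedDeriv_succ, iteratedDeriv_eq_equiv_comp]
  exact ((LinearIsometryEquiv.differentiable _).differentiableAt.comp t
    (hf.differentiableAt_iteratedFDeriv hn)).hasDerivAt

theorem hasDerivAt_deriv {f : ℝ → F} {t : ℝ} {N : ℕ∞ω} (hf : ContDiffAt ℝ N f t) (hN : 2 ≤ N) :
    HasDerivAt (deriv f) (deriv (deriv f) t) t := by
  simpa only [iteratedDeriv_succ, iteratedDeriv_zero] using
    hasDerivAt_iteratedDeriv (n := 1) (hf.of_le hN) (by norm_num)

end IteratedDeriv

section SecondOrderCondition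

theorem deriv_deriv_nonpos_of_isLocalMax {g : ℝ → ℝ} {a : ℝ} (hmax : IsLocalMax g a)
    (hcont : ContinuousAt g a) : deriv (deriv g) a ≤ 0 := by
  by_contra! hpos
  have hmin : IsLocalMin g a := isLocalMin_of_deriv_deriv_pos hpos hmax.deriv_eq_zero hcont
  have hconst : g =ᶠ[𝓝 a] fun _ => g a := by
    filter_upwards [hmax, hmin] with x hle hge using le_antisymm hle hge
  exact hpos.ne' (by simp [hconst.deriv.deriv_eq])

variable {E F : Type*} [NormedAddCommGroup E] [NormedSpace ℝ E] [NormedAddCommGroup F]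
  [NormedSpace ℝ F]

theorem deriv_deriv_comp_add_smul {f : E → F} {x : E} (hf : ContDiffAt ℝ 2 f x) (v : E) :
    deriv (deriv fun s : ℝ => f (x + s • v)) 0 = fderiv ℝ (fderiv ℝ f) x v v := by
  have hline : Tendsto (fun s : ℝ => x + s • v) (𝓝 0) (𝓝 x) :=
    Continuous.tendsto' (by fun_prop) _ _ (by simp)
  have hfirst : (deriv fun s : ℝ => f (x + s • v)) =ᶠ[𝓝 0] fun s => fderiv ℝ f (x + s • v) v := by
    filter_upwards [hline.eventually (hf.eventually (by simp))] with s hs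
    exact (hs.differentiableAt two_ne_zero).deriv_comp_add_smul
  have hdiff : DifferentiableAt ℝ (fderiv ℝ f) x :=
    (hf.fderiv_right (m := 1) (by norm_num)).differentiableAt one_ne_zero
  have hdiff' : DifferentiableAt ℝ (fun y => fderiv ℝ f y v) (x + (0 : ℝ) • v) := by
    simpa using hdiff.clm_apply (differentiableAt_const v)
  rw [hfirst.deriv_eq, hdiff'.deriv_comp_add_smul, zero_smul, add_zero,
    fderiv_clm_apply hdiff (differentiableAt_const v)]
  simp

theorem fderiv_fderiv_apply_self_nonpos_of_isLocalMax {f : E → ℝ} {x : E} (hmax : IsLocalMax f x)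
    (hf : ContDiffAt ℝ 2 f x) (v : E) : fderiv ℝ (fderiv ℝ f) x v v ≤ 0 := by
  have hline : ContinuousAt (fun s : ℝ => x + s • v) 0 := by fun_prop
  rw [← deriv_deriv_comp_add_smul hf]
  refine deriv_deriv_nonpos_of_isLocalMax ?_ ?_
  · have hlim : Tendsto (fun s : ℝ => x + s • v) (𝓝 0) (𝓝 x) := by simpa using hline.tendsto
    simpa [IsLocalMax, IsMaxFilter] using hlim.eventually hmax
  · exact ContinuousAt.comp' (f := fun s : ℝ => x + s • v) (by simpa using hf.continuousAt) hline

end SecondOrderCondition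

section CompNormSq

variable {E : Type*} [NormedAddCommGroup E] [InnerProductSpace ℝ E]

theorem hasFDerivAt_comp_norm_sq {φ : ℝ → ℝ} {x : E} (hφ : DifferentiableAt ℝ φ (‖x‖ ^ 2)) :
    HasFDerivAt (fun z => φ (‖z‖ ^ 2)) ((2 * deriv φ (‖x‖ ^ 2)) • innerSL ℝ x) x := by
  have hnorm : HasFDerivAt (fun z : E => ‖z‖ ^ 2) (2 • innerSL ℝ x) x :=
    (hasStrictFDerivAt_norm_sq x).hasFDerivAt
  refine (hφ.hasDerivAt.comp_hasFDerivAt x hnorm).congr_fderiv ?_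
  ext v
  simp only [smul_apply, coe_innerSL_apply, nsmul_eq_mul, Nat.cast_ofNat, smul_eq_mul]
  ring

theorem fderiv_fderiv_comp_norm_sq_apply_self {φ : ℝ → ℝ} {x : E}
    (hφ : ContDiffAt ℝ 2 φ (‖x‖ ^ 2)) (v : E) :
    fderiv ℝ (fderiv ℝ fun z => φ (‖z‖ ^ 2)) x v v =
      4 * deriv (deriv φ) (‖x‖ ^ 2) * inner ℝ x v ^ 2 + 2 * deriv φ (‖x‖ ^ 2) * ‖v‖ ^ 2 := by
  have hfirst : (fderiv ℝ fun z : E => φ (‖z‖ ^ 2)) =ᶠ[𝓝 x]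
      fun z => (2 * deriv φ (‖z‖ ^ 2)) • innerSL ℝ z := by
    have hlim : Tendsto (fun z : E => ‖z‖ ^ 2) (𝓝 x) (𝓝 (‖x‖ ^ 2)) :=
      (continuous_norm.pow 2).tendsto x
    filter_upwards [hlim.eventually (hφ.eventually (by simp))] with z hz
    exact (hasFDerivAt_comp_norm_sq (hz.differentiableAt two_ne_zero)).fderiv
  have hderiv := hasDerivAt_deriv hφ le_rfl
  have hsecond := ((hasFDerivAt_comp_norm_sq hderiv.differentiableAt).const_mul 2).fun_smul
    (innerSL ℝ).hasFDerivAt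
  rw [hfirst.fderiv_eq, hsecond.fderiv]
  have happly (z w : E) : (innerSL ℝ : E →L[ℝ] E →L[ℝ] ℝ) z w = inner ℝ z w := rfl
  simp only [add_apply, smul_apply, ContinuousLinearMap.smulRight_apply, happly, smul_eq_mul,
    real_inner_self_eq_norm_sq]
  ring

end CompNormSq

section Laplacian

variable {E E' F : Type*} [NormedAddCommGroup E] [InnerProductSpace ℝ E] [FiniteDimensional ℝ E]
  [NormedAddCommGroup E'] [InnerProductSpace ℝ E'] [FiniteDimensional ℝ E']
  [NormedAddCommGroup F] [NormedSpace ℝ F]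

theorem laplacian_eq_sum_fderiv_fderiv {ι : Type*} [Fintype ι] (b : OrthonormalBasis ι ℝ E)
    (f : E → F) (x : E) : Δ f x = ∑ i, fderiv ℝ (fderiv ℝ f) x (b i) (b i) := by
  simp [laplacian_eq_iteratedFDeriv_orthonormalBasis f b, iteratedFDeriv_two_apply]

theorem laplacian_nonpos_of_isLocalMax {f : E → ℝ} {x : E} (hmax : IsLocalMax f x)
    (hf : ContDiffAt ℝ 2 f x) : Δ f x ≤ 0 := by
  rw [laplacian_eq_sum_fderiv_fderiv (stdOrthonormalBasis ℝ E)]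
  exact Finset.sum_nonpos fun i _ => fderiv_fderiv_apply_self_nonpos_of_isLocalMax hmax hf _

theorem laplacian_comp_linearIsometryEquiv (f : E' → F) (Q : E ≃ₗᵢ[ℝ] E') :
    Δ (f ∘ Q) = Δ f ∘ Q := by
  funext x
  have hcomp : iteratedFDeriv ℝ 2 (f ∘ Q) x =
      (iteratedFDeriv ℝ 2 f (Q x)).compContinuousLinearMap fun _ => Q.toContinuousLinearEquiv := by
    simpa only [iteratedFDerivWithin_univ, preimage_univ] using!
      Q.toContinuousLinearEquiv.iteratedFDerivWithin_comp_right f uniqueDiffOn_univ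
        (mem_univ (Q x)) 2
  simp only [laplacian_eq_iteratedFDeriv_stdOrthonormalBasis, Function.comp_apply,
    laplacian_eq_iteratedFDeriv_orthonormalBasis f ((stdOrthonormalBasis ℝ E).map Q), hcomp]
  refine Finset.sum_congr rfl fun i _ => ?_
  rw [ContinuousMultilinearMap.compContinuousLinearMap_apply]
  congr 1
  ext j
  fin_cases j <;> rfl

theorem laplacian_comp_norm_sq {φ : ℝ → ℝ} {x : E} (hφ : ContDiffAt ℝ 2 φ (‖x‖ ^ 2)) :
    Δ (fun z : E => φ (‖z‖ ^ 2)) x = 4 * ‖x‖ ^ 2 * deriv (deriv φ) (‖x‖ ^ 2) +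
      2 * Module.finrank ℝ E * deriv φ (‖x‖ ^ 2) := by
  simp_rw [laplacian_eq_sum_fderiv_fderiv (stdOrthonormalBasis ℝ E),
    fderiv_fderiv_comp_norm_sq_apply_self hφ, Finset.sum_add_distrib, ← Finset.mul_sum]
  simp only [(stdOrthonormalBasis ℝ E).sum_sq_inner_left x, OrthonormalBasis.norm_eq_one, one_pow,
    Finset.sum_const, Finset.card_univ, Fintype.card_fin, nsmul_eq_mul, mul_one]
  ring

end Laplacian

section ComparisonPrinciple

variable {E : Type*} [NormedAddCommGroup E] [InnerProductSpace ℝ E] [FiniteDimensional ℝ E]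
  {K U : Set E}

theorem nonpos_of_laplacian_pos {w : E → ℝ} (hK : IsCompact K) (hU : IsOpen U) (hUK : U ⊆ K)
    (hcont : ContinuousOn w K) (hdiff : ContDiffOn ℝ 2 w U) (hbdry : ∀ x ∈ K \ U, w x ≤ 0)
    (hpos : ∀ x ∈ U, 0 < w x → 0 < Δ w x) : ∀ x ∈ K, w x ≤ 0 := by
  by_contra! ⟨x, hx, hwx⟩
  obtain ⟨m, hmK, hmax⟩ := hK.exists_isMaxOn ⟨x, hx⟩ hcont
  have hwm : 0 < w m := hwx.trans_le (hmax hx)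
  have hmU : m ∈ U := by_contra fun h => (hbdry m ⟨hmK, h⟩).not_gt hwm
  have hmem : U ∈ 𝓝 m := hU.mem_nhds hmU
  exact (hpos m hmU hwm).not_ge <| laplacian_nonpos_of_isLocalMax
    (hmax.isLocalMax (mem_of_superset hmem hUK)) (hdiff.contDiffAt hmem)

theorem le_of_laplacian_le_of_strictMono {F : E → ℝ → ℝ} {u v : E → ℝ} (hK : IsCompact K)
    (hU : IsOpen U) (hUK : U ⊆ K) (hu : ContinuousOn u K) (hv : ContinuousOn v K)
    (hu₂ : ContDiffOn ℝ 2 u U) (hv₂ : ContDiffOn ℝ 2 v U) (hF : ∀ x ∈ U, StrictMono (F x))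
    (hsub : ∀ x ∈ U, F x (u x) ≤ Δ u x) (hsuper : ∀ x ∈ U, Δ v x ≤ F x (v x))
    (hbdry : ∀ x ∈ K \ U, u x ≤ v x) : ∀ x ∈ K, u x ≤ v x := by
  suffices ∀ x ∈ K, (u - v) x ≤ 0 from fun x hx => sub_nonpos.1 (this x hx)
  refine nonpos_of_laplacian_pos hK hU hUK (hu.sub hv) (hu₂.sub hv₂)
    (fun x hx => sub_nonpos.2 (hbdry x hx)) fun x hx hpos => ?_
  have hmem : U ∈ 𝓝 x := hU.mem_nhds hx
  rw [(hu₂.contDiffAt hmem).laplacian_sub (hv₂.contDiffAt hmem)]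
  have hlt : F x (v x) < F x (u x) := hF x hx (sub_pos.1 hpos)
  linarith [hsub x hx, hsuper x hx]

end ComparisonPrinciple

section Reaction

/-- The nonlinearity `ε⁻²(e^y - t e^{-y})` of the equation; the Dirichlet problem reads
`Δu = reaction ε |x|² u`. -/
noncomputable def reaction (ε t y : ℝ) : ℝ := (ε ^ 2)⁻¹ * (exp y - t * exp (-y))

variable {ε t y : ℝ}

theorem reaction_strictMono (hε : 0 < ε) (ht : 0 ≤ t) : StrictMono (reaction ε t) := by
  intro y z hyz
  have hexp : exp y < exp z := exp_lt_exp.2 hyz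
  have hexp_neg : t * exp (-z) ≤ t * exp (-y) := by gcongr
  exact mul_lt_mul_of_pos_left (by linarith) (by positivity)

theorem reaction_sq_log (ε : ℝ) {r : ℝ} (hr : 0 < r) : reaction ε (r ^ 2) (log r) = 0 := by
  rw [reaction, exp_neg, exp_log hr, pow_two r, mul_inv_cancel_right₀ hr.ne', sub_self, mul_zero]

theorem reaction_nonneg (hε : 0 < ε) (ht : 0 < t) (hy : log t / 2 ≤ y) : 0 ≤ reaction ε t y := by
  have hzero : reaction ε t (log t / 2) = 0 := by
    simpa only [sq_sqrt ht.le, log_sqrt ht.le] using reaction_sq_log ε (sqrt_pos.2 ht)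
  exact hzero.ge.trans ((reaction_strictMono hε ht.le).monotone hy)

theorem reaction_le_mul_exp (ht : 0 ≤ t) : reaction ε t y ≤ (ε ^ 2)⁻¹ * exp y := by
  have : 0 ≤ t * exp (-y) := by positivity
  exact mul_le_mul_of_nonneg_left (by linarith) (by positivity)

end Reaction

theorem laplacian_log_norm {E : Type*} [NormedAddCommGroup E] [InnerProductSpace ℝ E]
    [FiniteDimensional ℝ E] (hE : Module.finrank ℝ E = 2) {x : E} (hx : x ≠ 0) :
    Δ (fun z : E => log ‖z‖) x = 0 := by
  have ht : ‖x‖ ^ 2 ≠ 0 := by simpa using hx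
  have hlog : (fun z : E => log ‖z‖) = fun z => log (‖z‖ ^ 2) / 2 := by
    funext z
    rw [log_pow]
    push_cast
    ring
  have hderiv : (deriv fun t => log t / 2) = fun t : ℝ => t⁻¹ / 2 := by
    funext t
    rw [deriv_div_const, deriv_log]
  rw [hlog, laplacian_comp_norm_sq (φ := fun t => log t / 2) ((contDiffAt_log.2 ht).div_const 2),
    hderiv, deriv_div_const, deriv_inv, hE]
  push_cast
  field_simp
  ring

theorem laplacian2_eq_laplacian {u : ℝ² → ℝ} {x : ℝ²} (hu : ContDiffAt ℝ 2 u x) :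
    laplacian2 u x = Δ u x := by
  have hdiff : DifferentiableAt ℝ (fderiv ℝ u) x :=
    (hu.fderiv_right (m := 1) (by norm_num)).differentiableAt one_ne_zero
  simp [laplacian_eq_sum_fderiv_fderiv (EuclideanSpace.basisFun (Fin 2) ℝ), laplacian2,
    fderiv_clm_apply hdiff (differentiableAt_const _)]

theorem norm_eq_one_of_mem_closedBall_sdiff_ball {E : Type*} [SeminormedAddCommGroup E] {x : E}
    (hx : x ∈ closedBall 0 1 \ ball 0 1) : ‖x‖ = 1 := by
  rwa [closedBall_sdiff_ball, mem_sphere_zero_iff_norm] at hx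

namespace IsDirichletSol

variable {ε : ℝ} {u v : ℝ² → ℝ} {x y : ℝ²}

theorem contDiffAt (hu : IsDirichletSol ε u) (hx : x ∈ ball 0 1) : ContDiffAt ℝ ∞ u x :=
  hu.2.1.contDiffAt (isOpen_ball.mem_nhds hx)

theorem contDiffOn_two (hu : IsDirichletSol ε u) : ContDiffOn ℝ 2 u (ball 0 1) :=
  mod_cast contDiffOn_infty.1 hu.2.1 2

theorem laplacian_eq (hu : IsDirichletSol ε u) (hx : x ∈ ball 0 1) :
    Δ u x = reaction ε (‖x‖ ^ 2) (u x) := by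
  rw [← laplacian2_eq_laplacian (mod_cast contDiffAt_infty.1 (hu.contDiffAt hx) 2), hu.2.2.1 x hx,
    reaction]

theorem apply_eq_zero (hu : IsDirichletSol ε u) (hx : ‖x‖ = 1) : u x = 0 :=
  hu.2.2.2 x (mem_sphere_zero_iff_norm.2 hx)

theorem nonpos (hε : 0 < ε) (hu : IsDirichletSol ε u) (hx : x ∈ closedBall 0 1) : u x ≤ 0 := by
  refine le_of_laplacian_le_of_strictMono (v := 0) (F := fun x => reaction ε (‖x‖ ^ 2))
    (isCompact_closedBall 0 1) isOpen_ball ball_subset_closedBall hu.1 continuousOn_const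
    hu.contDiffOn_two contDiffOn_const (fun z _ => reaction_strictMono hε (sq_nonneg _))
    (fun z hz => (hu.laplacian_eq hz).ge) (fun z hz => ?_)
    (fun z hz => (hu.apply_eq_zero (norm_eq_one_of_mem_closedBall_sdiff_ball hz)).le) x hx
  have hz : ‖z‖ ^ 2 ≤ 1 := pow_le_one₀ (norm_nonneg z) (mem_ball_zero_iff.1 hz).le
  have : Δ (0 : ℝ² → ℝ) z = 0 := congrFun (laplacian_const (c := (0 : ℝ))) z
  rw [this, Pi.zero_apply, reaction, neg_zero, exp_zero, mul_one]
  exact mul_nonneg (by positivity) (sub_nonneg.2 hz)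

theorem le (hε : 0 < ε) (hu : IsDirichletSol ε u) (hv : IsDirichletSol ε v)
    (hx : x ∈ closedBall 0 1) : u x ≤ v x :=
  le_of_laplacian_le_of_strictMono (F := fun x => reaction ε (‖x‖ ^ 2))
    (isCompact_closedBall 0 1) isOpen_ball ball_subset_closedBall hu.1 hv.1 hu.contDiffOn_two
    hv.contDiffOn_two (fun _ _ => reaction_strictMono hε (sq_nonneg _))
    (fun _ hz => (hu.laplacian_eq hz).ge) (fun _ hz => (hv.laplacian_eq hz).le)
    (fun z hz => by
      have hz := norm_eq_one_of_mem_closedBall_sdiff_ball hz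
      rw [hu.apply_eq_zero hz, hv.apply_eq_zero hz]) x hx

theorem log_norm_le (hε : 0 < ε) (hu : IsDirichletSol ε u) (hx : x ∈ closedBall 0 1)
    (hx₀ : x ≠ 0) : log ‖x‖ ≤ u x := by
  obtain ⟨m, hm⟩ := (isCompact_closedBall (0 : ℝ²) 1).bddBelow_image hu.1
  have hm (z : ℝ²) (hz : z ∈ closedBall 0 1) : m ≤ u z := hm (mem_image_of_mem u hz)
  -- the annulus starts at a radius where `log ‖z‖` has dropped below the minimum of `u`
  set δ := min ‖x‖ (exp m)
  have hδ : 0 < δ := lt_min (norm_pos_iff.2 hx₀) (exp_pos m)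
  have hne {z : ℝ²} (hz : δ ≤ ‖z‖) : z ≠ 0 := norm_pos_iff.1 (hδ.trans_le hz)
  have hlog : ContDiffOn ℝ 2 (fun z : ℝ² => log ‖z‖) {z | δ ≤ ‖z‖} :=
    contDiffOn_id.norm ℝ (fun z hz => hne hz) |>.log fun z hz => norm_ne_zero_iff.2 (hne hz)
  refine le_of_laplacian_le_of_strictMono (K := closedBall 0 1 \ ball 0 δ)
    (U := ball 0 1 \ closedBall 0 δ) (F := fun x => reaction ε (‖x‖ ^ 2))
    ((isCompact_closedBall 0 1).diff isOpen_ball) (isOpen_ball.sdiff isClosed_closedBall)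
    (sdiff_subset_sdiff ball_subset_closedBall ball_subset_closedBall)
    (hlog.continuousOn.mono fun z hz => by simpa using hz.2) (hu.1.mono sdiff_subset)
    (hlog.mono fun z hz => (not_le.1 (by simpa using hz.2)).le)
    (hu.contDiffOn_two.mono sdiff_subset) (fun _ _ => reaction_strictMono hε (sq_nonneg _))
    (fun z hz => ?_) (fun z hz => (hu.laplacian_eq hz.1).le) (fun z hz => ?_) x
    ⟨hx, by simp [δ]⟩
  · have hz₀ : z ≠ 0 := hne ((not_le.1 (by simpa using hz.2)).le)
    rw [laplacian_log_norm (by simp) hz₀, reaction_sq_log ε (norm_pos_iff.2 hz₀)]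
  · by_cases hz₁ : z ∈ ball 0 1
    · have hzδ : ‖z‖ ≤ δ := by simpa using not_not.1 fun h => hz.2 ⟨hz₁, h⟩
      have hz₀ : 0 < ‖z‖ := norm_pos_iff.2 (hne (by simpa using hz.1.2))
      exact ((log_le_iff_le_exp hz₀).2 (hzδ.trans (min_le_right _ _))).trans (hm z hz.1.1)
    · have hz₁ : ‖z‖ = 1 := norm_eq_one_of_mem_closedBall_sdiff_ball ⟨hz.1.1, hz₁⟩
      rw [hz₁, log_one, hu.apply_eq_zero hz₁]

theorem comp_linearIsometryEquiv (hu : IsDirichletSol ε u) (Q : ℝ² ≃ₗᵢ[ℝ] ℝ²) :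
    IsDirichletSol ε (u ∘ Q) := by
  have hball {z : ℝ²} (hz : z ∈ ball 0 1) : Q z ∈ ball 0 1 := by simpa using hz
  have hsmooth : ContDiffOn ℝ ∞ (u ∘ Q) (ball 0 1) :=
    hu.2.1.comp Q.contDiff.contDiffOn fun _ => hball
  refine ⟨hu.1.comp Q.continuous.continuousOn fun z hz => by simpa using hz, hsmooth,
    fun z hz => ?_, fun z hz => hu.apply_eq_zero (by simpa using hz)⟩
  rw [laplacian2_eq_laplacian, laplacian_comp_linearIsometryEquiv, Function.comp_apply,
    hu.laplacian_eq (hball hz), Q.norm_map, reaction, Function.comp_apply]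
  exact mod_cast contDiffAt_infty.1 (hsmooth.contDiffAt (isOpen_ball.mem_nhds hz)) 2

theorem eq_of_norm_eq (hε : 0 < ε) (hu : IsDirichletSol ε u) (hx : x ∈ closedBall 0 1)
    (hxy : ‖x‖ = ‖y‖) : u x = u y := by
  set Q := (ℝ ∙ (x - y))ᗮ.reflection
  have hQ : u (Q x) = u y := congrArg u (Submodule.reflection_sub hxy)
  have hcomp := hu.comp_linearIsometryEquiv Q
  rw [← hQ]
  exact le_antisymm (hu.le hε hcomp hx) (hcomp.le hε hu hx)

end IsDirichletSol

section LimitAtZero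

variable {f g f' g' h : ℝ → ℝ} {a b W : ℝ}

theorem nonneg_of_hasDerivAt_nonneg_of_tendsto_zero
    (hf : ∀ t ∈ Ioo a b, HasDerivAt f (f' t) t) (hf' : ∀ t ∈ Ioo a b, 0 ≤ f' t)
    (hlim : Tendsto f (𝓝[>] a) (𝓝 0)) : ∀ t ∈ Ioo a b, 0 ≤ f t := by
  have hmono : MonotoneOn f (Ioo a b) := by
    refine monotoneOn_of_hasDerivWithinAt_nonneg (f' := f') (convex_Ioo a b)
      (fun t ht => (hf t ht).continuousAt.continuousWithinAt) ?_ ?_ <;> rw [interior_Ioo]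
    exacts [fun t ht => (hf t ht).hasDerivWithinAt, hf']
  refine fun t ht => le_of_tendsto hlim ?_
  filter_upwards [Ioo_mem_nhdsGT ht.1] with s hs
  exact hmono ⟨hs.1, hs.2.trans ht.2⟩ ht hs.2.le

theorem abs_le_of_abs_deriv_le_of_tendsto_zero
    (hf : ∀ t ∈ Ioo a b, HasDerivAt f (f' t) t) (hg : ∀ t ∈ Ioo a b, HasDerivAt g (g' t) t)
    (hfg : ∀ t ∈ Ioo a b, |f' t| ≤ g' t) (hf₀ : Tendsto f (𝓝[>] a) (𝓝 0))
    (hg₀ : Tendsto g (𝓝[>] a) (𝓝 0)) : ∀ t ∈ Ioo a b, |f t| ≤ g t := by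
  intro t ht
  have hsub := nonneg_of_hasDerivAt_nonneg_of_tendsto_zero (f := fun s => g s - f s)
    (fun s hs => (hg s hs).sub (hf s hs)) (fun s hs => by linarith [le_of_abs_le (hfg s hs)])
    (by simpa using hg₀.sub hf₀) t ht
  have hadd := nonneg_of_hasDerivAt_nonneg_of_tendsto_zero (f := fun s => g s + f s)
    (fun s hs => (hg s hs).add (hf s hs)) (fun s hs => by linarith [neg_le_of_abs_le (hfg s hs)])
    (by simpa using hg₀.add hf₀) t ht
  exact abs_le.2 ⟨by linarith, by linarith⟩

theorem abs_le_div_of_hasDerivAt_pow_mul {n : ℕ}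
    (hf : ∀ t ∈ Ioo 0 b, HasDerivAt (fun s => s ^ (n + 1) * f s) (t ^ n * h t) t)
    (hlim : Tendsto (fun s => s ^ (n + 1) * f s) (𝓝[>] 0) (𝓝 0))
    (hh : ∀ t ∈ Ioo 0 b, |h t| ≤ W) : ∀ t ∈ Ioo 0 b, |f t| ≤ W / (n + 1) := by
  intro t ht
  have hpow (s : ℝ) : HasDerivAt (fun s => s ^ (n + 1) * (W / (n + 1))) (s ^ n * W) s := by
    refine ((hasDerivAt_pow (n + 1) s).mul_const (W / (n + 1))).congr_deriv ?_
    rw [Nat.add_sub_cancel]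
    push_cast
    field_simp
  have hbound := abs_le_of_abs_deriv_le_of_tendsto_zero hf (fun s _ => hpow s)
    (fun s hs => by
      rw [abs_mul, abs_of_pos (pow_pos hs.1 n)]
      exact mul_le_mul_of_nonneg_left (hh s hs) (pow_pos hs.1 n).le)
    hlim (tendsto_nhdsWithin_of_tendsto_nhds (Continuous.tendsto' (by fun_prop) _ _ (by simp))) t ht
  rw [abs_mul, abs_of_pos (pow_pos ht.1 _)] at hbound
  exact le_of_mul_le_mul_left hbound (pow_pos ht.1 _)

end LimitAtZero

section IteratedDerivOfComp

variable {E F G : Type*} [NormedAddCommGroup E] [NormedSpace ℝ E] [NormedAddCommGroup F]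
  [NormedSpace ℝ F] [NormedAddCommGroup G] [NormedSpace ℝ G]

theorem iteratedDeriv_succ_id_mul {g : ℝ → ℝ} {t : ℝ} {n : ℕ} (hg : ContDiffAt ℝ (n + 1) g t) :
    iteratedDeriv (n + 1) (fun s => s * g s) t =
      t * iteratedDeriv (n + 1) g t + (n + 1) * iteratedDeriv n g t := by
  rw [iteratedDeriv_fun_mul contDiffAt_id (mod_cast hg), Finset.sum_range_succ',
    Finset.sum_range_succ']
  simp only [iteratedDeriv_fun_id, Nat.add_eq_zero_iff, one_ne_zero, and_false, and_self,
    ↓reduceIte, Nat.add_eq_right, mul_zero, Nat.reduceSubDiff, zero_mul, Finset.sum_const_zero,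
    zero_add, Nat.choose_one_right, Nat.cast_add, Nat.cast_one, mul_one, add_tsub_cancel_right,
    Nat.choose_zero_right, one_mul, tsub_zero]
  ring

theorem abs_iteratedDeriv_id_mul_le {g : ℝ → ℝ} {t : ℝ} {n : ℕ} (hg : ContDiffAt ℝ n g t)
    {M B a b : ℝ} (hB : 0 ≤ B) (hb : 0 ≤ b) (haM : |t| * M ≤ a) (hbM : M ≤ b * B)
    (hbound : ∀ m ≤ n, |iteratedDeriv m g t| ≤ m.factorial * M * B ^ m) :
    |iteratedDeriv n (fun s => s * g s) t| ≤ (a + b) * (n.factorial * B ^ n) := by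
  have hmain : |t * iteratedDeriv n g t| ≤ a * (n.factorial * B ^ n) := by
    rw [abs_mul]
    calc |t| * |iteratedDeriv n g t| ≤ |t| * (n.factorial * M * B ^ n) := by
          gcongr
          exact hbound n le_rfl
      _ = |t| * M * (n.factorial * B ^ n) := by ring
      _ ≤ a * (n.factorial * B ^ n) := by gcongr
  cases n with
  | zero =>
    simp only [iteratedDeriv_zero, Nat.factorial_zero, Nat.cast_one, pow_zero] at hmain ⊢
    linarith
  | succ n =>
    have hlower : |(n + 1) * iteratedDeriv n g t| ≤ b * ((n + 1).factorial * B ^ (n + 1)) := by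
      rw [abs_mul, abs_of_pos (by positivity), Nat.factorial_succ]
      push_cast
      calc (n + 1) * |iteratedDeriv n g t| ≤ (n + 1) * (n.factorial * (b * B) * B ^ n) := by
            gcongr
            refine (hbound n n.le_succ).trans ?_
            gcongr
        _ = b * ((n + 1) * n.factorial * B ^ (n + 1)) := by ring
    rw [iteratedDeriv_succ_id_mul (mod_cast hg), add_mul a]
    exact (abs_add_le _ _).trans (add_le_add hmain hlower)

theorem iteratedDeriv_comp_mul_left (n : ℕ) (g : ℝ → F) (c : ℝ) :
    iteratedDeriv n (fun s => g (c * s)) = fun s => c ^ n • iteratedDeriv n g (c * s) := by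
  induction n with
  | zero => simp
  | succ n ih =>
    funext s
    rw [iteratedDeriv_succ, ih, deriv_fun_const_smul_field, deriv_comp_mul_left,
      ← iteratedDeriv_succ, smul_smul, pow_succ]

theorem norm_iteratedFDeriv_comp_le_of_contDiffAt {g : F → G} {f : E → F} {x : E} {n : ℕ}
    (hg : ContDiffAt ℝ n g (f x)) (hf : ContDiffAt ℝ n f x) {C D : ℝ}
    (hC : ∀ i ≤ n, ‖iteratedFDeriv ℝ i g (f x)‖ ≤ C)
    (hD : ∀ i, 1 ≤ i → i ≤ n → ‖iteratedFDeriv ℝ i f x‖ ≤ D ^ i) :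
    ‖iteratedFDeriv ℝ n (g ∘ f) x‖ ≤ n.factorial * C * D ^ n := by
  obtain ⟨T, hT, hgT⟩ := hg.contDiffOn le_rfl (by simp)
  obtain ⟨S, hS, hfS⟩ := hf.contDiffOn le_rfl (by simp)
  obtain ⟨T', hT', hT'o, hxT'⟩ := _root_.mem_nhds_iff.1 hT
  obtain ⟨S', hS', hS'o, hxS'⟩ :=
    _root_.mem_nhds_iff.1 (inter_mem hS (hf.continuousAt.preimage_mem_nhds (hT'o.mem_nhds hxT')))
  have hbound := norm_iteratedFDerivWithin_comp_le (hgT.mono hT')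
    (hfS.mono (hS'.trans inter_subset_left)) le_rfl hT'o.uniqueDiffOn hS'o.uniqueDiffOn
    (fun z hz => (hS' hz).2) hxS'
    (fun i hi => by rw [iteratedFDerivWithin_of_isOpen i hT'o hxT']; exact hC i hi)
    (fun i hi hin => by rw [iteratedFDerivWithin_of_isOpen i hS'o hxS']; exact hD i hi hin)
  rwa [iteratedFDerivWithin_of_isOpen n hS'o hxS'] at hbound

theorem norm_iteratedFDeriv_comp_le_of_scaling {g : ℝ → G} {f : E → ℝ} {x : E} {n : ℕ}
    (hg : ContDiffAt ℝ n g (f x)) (hf : ContDiffAt ℝ n f x) {A C D : ℝ} (hA : 0 < A)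
    (hC : ∀ i ≤ n, ‖iteratedDeriv i g (f x)‖ ≤ C * A ^ i)
    (hD : ∀ i, 1 ≤ i → i ≤ n → A * ‖iteratedFDeriv ℝ i f x‖ ≤ D ^ i) :
    ‖iteratedFDeriv ℝ n (fun z => g (f z)) x‖ ≤ n.factorial * C * D ^ n := by
  have hcancel (s : ℝ) : A⁻¹ * (A * s) = s := inv_mul_cancel_left₀ hA.ne' s
  have hscale : (fun z => g (f z)) = (fun s => g (A⁻¹ * s)) ∘ fun z => A * f z :=
    funext fun z => by rw [Function.comp_apply, hcancel]
  rw [hscale]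
  refine norm_iteratedFDeriv_comp_le_of_contDiffAt ?_ (contDiffAt_const.mul hf)
    (fun i hi => ?_) (fun i hi hin => ?_)
  · exact ContDiffAt.comp (g := g) _ (by rwa [hcancel]) (contDiffAt_const.mul contDiffAt_id)
  · have hnorm : ‖A⁻¹ ^ i‖ = (A ^ i)⁻¹ := by rw [norm_of_nonneg (by positivity), inv_pow]
    simp only [norm_iteratedFDeriv_eq_norm_iteratedDeriv, iteratedDeriv_comp_mul_left, hcancel,
      norm_smul, hnorm]
    rw [inv_mul_le_iff₀ (by positivity), mul_comm]
    exact hC i hi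
  · have := iteratedFDeriv_const_smul_apply (a := A) (hf.of_le (m := i) (mod_cast hin))
    rw [show (fun z => A * f z) = A • f from rfl, this, norm_smul, norm_of_nonneg hA.le]
    exact hD i hi hin

theorem abs_iteratedDeriv_exp_comp_le {f : ℝ → ℝ} {t B : ℝ} {n : ℕ} (hf : ContDiffAt ℝ n f t)
    (hB : ∀ i, 1 ≤ i → i ≤ n → |iteratedDeriv i f t| ≤ B ^ i) :
    |iteratedDeriv n (fun s => exp (f s)) t| ≤ n.factorial * exp (f t) * B ^ n := by
  rw [← norm_eq_abs, ← norm_iteratedFDeriv_eq_norm_iteratedDeriv]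
  refine norm_iteratedFDeriv_comp_le_of_contDiffAt contDiff_exp.contDiffAt hf
    (fun i _ => ?_) fun i hi hin => ?_
  · rw [norm_iteratedFDeriv_eq_norm_iteratedDeriv, iteratedDeriv_eq_iterate, iter_deriv_exp,
      norm_of_nonneg (exp_pos _).le]
  · rw [norm_iteratedFDeriv_eq_norm_iteratedDeriv]
    exact hB i hi hin

end IteratedDerivOfComp

/-- `φ` is the profile on `(0, 1)` of a radial solution `u(x) = φ(|x|²)` of
`Δu = reaction ε |x|² u` lying between the singular solution `log |x|` and `0`; `tendsto` says that
no point mass is created at the origin. -/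
structure IsRadialProfile (ε : ℝ) (φ : ℝ → ℝ) : Prop where
  contDiffOn : ContDiffOn ℝ ∞ φ (Ioo 0 1)
  nonpos : ∀ t ∈ Ioo 0 1, φ t ≤ 0
  log_le : ∀ t ∈ Ioo 0 1, log t / 2 ≤ φ t
  ode : ∀ t ∈ Ioo 0 1, 4 * (t * deriv (deriv φ) t + deriv φ t) = reaction ε t (φ t)
  tendsto : Tendsto (fun t => t * deriv φ t) (𝓝[>] 0) (𝓝 0)

/-- The length scale on which a radial profile varies near `t`. -/
noncomputable def profileScale (ε t : ℝ) : ℝ := ε * √(ε ^ 2 + t)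

section ProfileScale

variable {ε t : ℝ}

theorem profileScale_pos (hε : 0 < ε) (ht : 0 ≤ t) : 0 < profileScale ε t := by
  unfold profileScale
  positivity

theorem profileScale_sq (ht : 0 ≤ t) : profileScale ε t ^ 2 = ε ^ 2 * (ε ^ 2 + t) := by
  rw [profileScale, mul_pow, sq_sqrt (by positivity)]

theorem sq_le_profileScale (hε : 0 < ε) (ht : 0 ≤ t) : ε ^ 2 ≤ profileScale ε t := by
  refine le_of_sq_le_sq ?_ (profileScale_pos hε ht).le
  rw [profileScale_sq ht, pow_two (ε ^ 2)]
  gcongr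
  linarith

theorem mul_le_profileScale (hε : 0 < ε) (r : ℝ) : ε * r ≤ profileScale ε (r ^ 2) := by
  unfold profileScale
  gcongr
  exact le_sqrt_of_sq_le (le_add_of_nonneg_left (sq_nonneg ε))

theorem profileScale_le_two_mul_sq (hε : 0 < ε) (ht : 0 ≤ t) (htε : t ≤ ε ^ 2) :
    profileScale ε t ≤ 2 * ε ^ 2 := by
  refine le_of_sq_le_sq ?_ (by positivity)
  rw [profileScale_sq ht]
  nlinarith [sq_pos_of_pos hε]

end ProfileScale

namespace IsRadialProfile

variable {ε t : ℝ} {φ : ℝ → ℝ}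

theorem contDiffAt (h : IsRadialProfile ε φ) (ht : t ∈ Ioo 0 1) (n : ℕ) : ContDiffAt ℝ n φ t :=
  (contDiffOn_infty.1 h.contDiffOn n).contDiffAt (isOpen_Ioo.mem_nhds ht)

theorem hasDerivAt (h : IsRadialProfile ε φ) (ht : t ∈ Ioo 0 1) : HasDerivAt φ (deriv φ t) t :=
  ((h.contDiffAt ht 1).differentiableAt (by simp)).hasDerivAt

theorem hasDerivAt_mul_deriv (h : IsRadialProfile ε φ) (ht : t ∈ Ioo 0 1) :
    HasDerivAt (fun s => s * deriv φ s) (reaction ε t (φ t) / 4) t := by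
  refine ((hasDerivAt_id' t).mul (hasDerivAt_deriv (h.contDiffAt ht 2) le_rfl)).congr_deriv ?_
  linarith [h.ode t ht]

theorem deriv_nonneg (hε : 0 < ε) (h : IsRadialProfile ε φ) (ht : t ∈ Ioo 0 1) :
    0 ≤ deriv φ t := by
  refine nonneg_of_mul_nonneg_right ?_ ht.1
  exact nonneg_of_hasDerivAt_nonneg_of_tendsto_zero (fun s hs => h.hasDerivAt_mul_deriv hs)
    (fun s hs => div_nonneg (reaction_nonneg hε hs.1 (h.log_le s hs)) zero_le_four) h.tendsto t ht

theorem deriv_le (hε : 0 < ε) (h : IsRadialProfile ε φ) (ht : t ∈ Ioo 0 1) :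
    deriv φ t ≤ (ε ^ 2)⁻¹ / 4 := by
  have hreaction (s : ℝ) (hs : s ∈ Ioo 0 1) : |reaction ε s (φ s) / 4| ≤ (ε ^ 2)⁻¹ / 4 := by
    rw [abs_of_nonneg (div_nonneg (reaction_nonneg hε hs.1 (h.log_le s hs)) zero_le_four)]
    have hexp : exp (φ s) ≤ 1 := exp_le_one_iff.2 (h.nonpos s hs)
    have := (reaction_le_mul_exp (ε := ε) (y := φ s) hs.1.le).trans
      (mul_le_of_le_one_right (by positivity) hexp)
    gcongr
  have habs := abs_le_div_of_hasDerivAt_pow_mul (n := 0) (f := deriv φ)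
    (by simpa using fun s hs₀ hs₁ => h.hasDerivAt_mul_deriv ⟨hs₀, hs₁⟩)
    (by simpa using h.tendsto) hreaction t ht
  simpa using (le_abs_self _).trans habs

theorem sub_le_mul_sub (hε : 0 < ε) (h : IsRadialProfile ε φ) {s : ℝ} (hs : s ∈ Ioo 0 1)
    (ht : t ∈ Ioo 0 1) (hst : s ≤ t) : φ t - φ s ≤ (ε ^ 2)⁻¹ / 4 * (t - s) := by
  refine (convex_Ioo 0 1).image_sub_le_mul_sub_of_deriv_le
    (fun r hr => (h.hasDerivAt hr).continuousAt.continuousWithinAt) ?_ ?_ s hs t ht hst <;>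
    rw [interior_Ioo]
  exacts [fun r hr => (h.hasDerivAt hr).differentiableAt.differentiableWithinAt,
    fun r hr => h.deriv_le hε hr]

theorem log_max_le (hε : 0 < ε) (hε₁ : ε < 1) (h : IsRadialProfile ε φ) (ht : t ∈ Ioo 0 1) :
    log (max t (ε ^ 2)) / 2 - 1 / 4 ≤ φ t := by
  rcases le_total (ε ^ 2) t with htε | htε
  · rw [max_eq_left htε]
    linarith [h.log_le t ht]
  · have hmem : ε ^ 2 ∈ Ioo (0 : ℝ) 1 := ⟨by positivity, pow_lt_one₀ hε.le hε₁ two_ne_zero⟩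
    have hincr : (ε ^ 2)⁻¹ / 4 * (ε ^ 2 - t) ≤ 1 / 4 := by
      calc (ε ^ 2)⁻¹ / 4 * (ε ^ 2 - t) ≤ (ε ^ 2)⁻¹ / 4 * ε ^ 2 := by
            gcongr
            linarith [ht.1]
        _ = 1 / 4 := by field_simp
    rw [max_eq_right htε]
    linarith [h.log_le _ hmem, h.sub_le_mul_sub hε ht hmem htε]

theorem exp_neg_le (hε : 0 < ε) (hε₁ : ε < 1) (h : IsRadialProfile ε φ) (ht : t ∈ Ioo 0 1) :
    exp (-φ t) ≤ 2 / √(ε ^ 2 + t) := by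
  have ht₀ : 0 < t := ht.1
  have hmax : 0 < max t (ε ^ 2) := lt_max_of_lt_left ht₀
  have hexp_half : exp (1 / 2) ≤ 2 := by
    have := exp_bound_div_one_sub_of_interval (x := 1 / 2) (by norm_num) (by norm_num)
    norm_num at this ⊢
    exact this
  have hsq : exp (-φ t) ^ 2 ≤ 2 / max t (ε ^ 2) := by
    calc exp (-φ t) ^ 2 = exp (-2 * φ t) := by rw [← exp_nat_mul]; push_cast; ring_nf
      _ ≤ exp (1 / 2 - log (max t (ε ^ 2))) := by
        gcongr
        linarith [h.log_max_le hε hε₁ ht]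
      _ = exp (1 / 2) / max t (ε ^ 2) := by rw [exp_sub, exp_log hmax]
      _ ≤ 2 / max t (ε ^ 2) := by gcongr
  refine le_of_sq_le_sq (hsq.trans ?_) (by positivity)
  rw [div_pow, sq_sqrt (by positivity), div_le_div_iff₀ hmax (by positivity)]
  linarith [le_max_left t (ε ^ 2), le_max_right t (ε ^ 2)]

theorem abs_le (hε : 0 < ε) (hε₁ : ε < 1) (h : IsRadialProfile ε φ) (ht : t ∈ Ioo 0 1) :
    |φ t| ≤ (ε ^ 2)⁻¹ := by
  have hlog : log (ε ^ 2) ≤ log (max t (ε ^ 2)) := log_le_log (by positivity) (le_max_right _ _)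
  have hinv : log (ε ^ 2)⁻¹ ≤ (ε ^ 2)⁻¹ - 1 := log_le_sub_one_of_pos (by positivity)
  have hone : 1 ≤ (ε ^ 2)⁻¹ := (one_le_inv₀ (by positivity)).2 (pow_le_one₀ hε.le hε₁.le)
  rw [log_inv] at hinv
  rw [abs_of_nonpos (h.nonpos t ht)]
  linarith [h.log_max_le hε hε₁ ht]

-- Multiplying the equation `(t φ')' = reaction / 4` by `2 t φ'` gives
-- `((t φ')²)' ≤ (2 ε²)⁻¹ t e^φ φ' ≤ (2 ε²)⁻¹ (t e^φ)'`.
theorem mul_deriv_sq_le (hε : 0 < ε) (h : IsRadialProfile ε φ) (ht : t ∈ Ioo 0 1) :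
    (t * deriv φ t) ^ 2 ≤ (ε ^ 2)⁻¹ / 2 * t := by
  have hexp_le_one {s : ℝ} (hs : s ∈ Ioo 0 1) : exp (φ s) ≤ 1 := exp_le_one_iff.2 (h.nonpos s hs)
  have hsource : Tendsto (fun s => s * exp (φ s)) (𝓝[>] 0) (𝓝 0) := by
    refine squeeze_zero' ?_ ?_ (tendsto_id.mono_left nhdsWithin_le_nhds) <;>
      filter_upwards [Ioo_mem_nhdsGT one_pos] with s hs
    exacts [mul_nonneg hs.1.le (exp_pos _).le, mul_le_of_le_one_right hs.1.le (hexp_le_one hs)]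
  have henergy := nonneg_of_hasDerivAt_nonneg_of_tendsto_zero
    (f := fun s => (ε ^ 2)⁻¹ / 2 * (s * exp (φ s)) - (s * deriv φ s) ^ 2)
    (fun s hs => (((hasDerivAt_id' s).mul (h.hasDerivAt hs).exp).const_mul _).sub
      ((h.hasDerivAt_mul_deriv hs).pow 2))
    (fun s hs => by
      have hflux := mul_le_mul_of_nonneg_left (reaction_le_mul_exp (ε := ε) (y := φ s) hs.1.le)
        (mul_nonneg hs.1.le (h.deriv_nonneg hε hs))
      have : 0 ≤ (ε ^ 2)⁻¹ * exp (φ s) := by positivity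
      linear_combination hflux / 2 + this / 2)
    (by simpa using (hsource.const_mul _).sub (h.tendsto.pow 2)) t ht
  calc (t * deriv φ t) ^ 2 ≤ (ε ^ 2)⁻¹ / 2 * (t * exp (φ t)) := sub_nonneg.1 henergy
    _ ≤ (ε ^ 2)⁻¹ / 2 * t := by
      gcongr
      exact mul_le_of_le_one_right ht.1.le (hexp_le_one ht)

theorem deriv_le_inv_profileScale (hε : 0 < ε) (h : IsRadialProfile ε φ) (ht : t ∈ Ioo 0 1) :
    deriv φ t ≤ (profileScale ε t)⁻¹ := by
  have ht₀ : 0 < t := ht.1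
  have hinner : ε ^ 2 * deriv φ t ≤ 1 / 4 := by
    calc ε ^ 2 * deriv φ t ≤ ε ^ 2 * ((ε ^ 2)⁻¹ / 4) := by
          gcongr
          exact h.deriv_le hε ht
      _ = 1 / 4 := by field_simp
  have houter : ε ^ 2 * (t * deriv φ t ^ 2) ≤ 1 / 2 := by
    refine le_of_mul_le_mul_left ?_ ht₀
    calc t * (ε ^ 2 * (t * deriv φ t ^ 2)) = ε ^ 2 * (t * deriv φ t) ^ 2 := by ring
      _ ≤ ε ^ 2 * ((ε ^ 2)⁻¹ / 2 * t) := by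
        gcongr
        exact h.mul_deriv_sq_le hε ht
      _ = t * (1 / 2) := by field_simp
  have hderiv : 0 ≤ ε ^ 2 * deriv φ t := mul_nonneg (by positivity) (h.deriv_nonneg hε ht)
  rw [← one_div, le_div_iff₀ (profileScale_pos hε ht₀.le)]
  refine le_of_sq_le_sq ?_ zero_le_one
  calc (deriv φ t * profileScale ε t) ^ 2
      = (ε ^ 2 * deriv φ t) ^ 2 + ε ^ 2 * (t * deriv φ t ^ 2) := by
        rw [mul_pow, profileScale_sq ht₀.le]
        ring
    _ ≤ (1 / 4) ^ 2 + 1 / 2 := add_le_add (pow_le_pow_left₀ hderiv hinner 2) houter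
    _ ≤ 1 ^ 2 := by norm_num

end IsRadialProfile

/-- The derivatives of `φ` of orders `1, …, n` obey, with constant `K`, the bounds of a function
varying on the scale `profileScale ε`. -/
def HasDerivBounds (ε : ℝ) (φ : ℝ → ℝ) (K : ℝ) (n : ℕ) : Prop :=
  ∀ t ∈ Ioo 0 1, ∀ j, 1 ≤ j → j ≤ n → |iteratedDeriv j φ t| ≤ (K / profileScale ε t) ^ j

theorem HasDerivBounds.of_le {ε K : ℝ} {φ : ℝ → ℝ} {m n : ℕ} (hB : HasDerivBounds ε φ K n)
    (hmn : m ≤ n) : HasDerivBounds ε φ K m :=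
  fun t ht j hj hjm => hB t ht j hj (hjm.trans hmn)

namespace IsRadialProfile

variable {ε t K : ℝ} {φ : ℝ → ℝ} {n : ℕ}

theorem abs_iteratedDeriv_exp_le (h : IsRadialProfile ε φ) (hB : HasDerivBounds ε φ K n)
    (hε : 0 < ε) (hK : 1 ≤ K) (ht : t ∈ Ioo 0 1) :
    |iteratedDeriv n (fun s => exp (φ s)) t| ≤ n.factorial * (K / profileScale ε t) ^ n := by
  have := profileScale_pos hε ht.1.le
  refine (abs_iteratedDeriv_exp_comp_le (h.contDiffAt ht n) (hB t ht)).trans ?_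
  gcongr
  exact mul_le_of_le_one_right (by positivity) (exp_le_one_iff.2 (h.nonpos t ht))

theorem abs_iteratedDeriv_exp_neg_le (h : IsRadialProfile ε φ) (hB : HasDerivBounds ε φ K n)
    (hε : 0 < ε) (hε₁ : ε < 1) (hK : 1 ≤ K) (ht : t ∈ Ioo 0 1) :
    |iteratedDeriv n (fun s => exp (-φ s)) t| ≤
      n.factorial * (2 / √(ε ^ 2 + t)) * (K / profileScale ε t) ^ n := by
  have := profileScale_pos hε ht.1.le
  refine (abs_iteratedDeriv_exp_comp_le (h.contDiffAt ht n).neg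
    (B := K / profileScale ε t) fun j hj hjn => ?_).trans ?_
  · rw [iteratedDeriv_fun_neg, abs_neg]
    exact hB t ht j hj hjn
  · gcongr
    exact h.exp_neg_le hε hε₁ ht

theorem abs_iteratedDeriv_mul_exp_neg_le (h : IsRadialProfile ε φ) (hB : HasDerivBounds ε φ K n)
    (hε : 0 < ε) (hε₁ : ε < 1) (hK : 1 ≤ K) (ht : t ∈ Ioo 0 1) :
    |iteratedDeriv n (fun s => s * exp (-φ s)) t| ≤
      6 * n.factorial * (K / profileScale ε t) ^ n := by
  have ht₀ : 0 < t := ht.1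
  have hscale := profileScale_pos hε ht₀.le
  have hsqrt : 0 < √(ε ^ 2 + t) := by positivity
  have houter : |t| * (2 / √(ε ^ 2 + t)) ≤ 4 := by
    have hsqrt_le : √(ε ^ 2 + t) ≤ 2 := (sqrt_le_left zero_le_two).2 (by nlinarith [ht.2])
    have hsq : √(ε ^ 2 + t) ^ 2 = ε ^ 2 + t := sq_sqrt (by positivity)
    rw [abs_of_pos ht₀, ← mul_div_assoc, div_le_iff₀ hsqrt]
    nlinarith
  have hinner : 2 / √(ε ^ 2 + t) ≤ 2 * (K / profileScale ε t) := by
    rw [div_le_iff₀ hsqrt, profileScale]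
    calc (2 : ℝ) ≤ 2 * (K / ε) := by linarith [(one_le_div hε).2 (hε₁.le.trans hK)]
      _ = 2 * (K / (ε * √(ε ^ 2 + t))) * √(ε ^ 2 + t) := by field_simp
  refine (abs_iteratedDeriv_id_mul_le (h.contDiffAt ht n).neg.exp (by positivity) zero_le_two
    houter hinner fun m hm => ?_).trans_eq (by ring)
  exact h.abs_iteratedDeriv_exp_neg_le (hB.of_le hm) hε hε₁ hK ht

theorem abs_iteratedDeriv_reaction_le (h : IsRadialProfile ε φ) (hB : HasDerivBounds ε φ K n)
    (hε : 0 < ε) (hε₁ : ε < 1) (hK : 1 ≤ K) (ht : t ∈ Ioo 0 1) :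
    |iteratedDeriv n (fun s => reaction ε s (φ s)) t| ≤
      8 * n.factorial * (ε ^ 2)⁻¹ * (K / profileScale ε t) ^ n := by
  have hscale := profileScale_pos hε ht.1.le
  have hsmooth := h.contDiffAt ht n
  have hnonneg : 0 ≤ n.factorial * (K / profileScale ε t) ^ n := by positivity
  unfold reaction
  rw [iteratedDeriv_const_mul_field, iteratedDeriv_fun_sub hsmooth.exp
    (contDiffAt_fun_id.mul hsmooth.neg.exp), abs_mul, abs_of_pos (by positivity)]
  calc (ε ^ 2)⁻¹ * |iteratedDeriv n (fun s => exp (φ s)) t -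
        iteratedDeriv n (fun s => s * exp (-φ s)) t|
      ≤ (ε ^ 2)⁻¹ * (8 * (n.factorial * (K / profileScale ε t) ^ n)) := by
        gcongr
        linarith [abs_sub (iteratedDeriv n (fun s => exp (φ s)) t)
          (iteratedDeriv n (fun s => s * exp (-φ s)) t), h.abs_iteratedDeriv_exp_le hB hε hK ht,
          h.abs_iteratedDeriv_mul_exp_neg_le hB hε hε₁ hK ht]
    _ = 8 * n.factorial * (ε ^ 2)⁻¹ * (K / profileScale ε t) ^ n := by ring

theorem mul_iteratedDeriv_add_eq (h : IsRadialProfile ε φ) (ht : t ∈ Ioo 0 1) (n : ℕ) :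
    t * iteratedDeriv (n + 2) φ t + (n + 1) * iteratedDeriv (n + 1) φ t =
      iteratedDeriv n (fun s => reaction ε s (φ s)) t / 4 := by
  have hflux : deriv (fun s => s * deriv φ s) =ᶠ[𝓝 t] fun s => reaction ε s (φ s) / 4 := by
    filter_upwards [isOpen_Ioo.mem_nhds ht] with s hs using (h.hasDerivAt_mul_deriv hs).deriv
  have hsmooth : ContDiffAt ℝ (n + 1) (deriv φ) t :=
    (h.contDiffOn.deriv_of_isOpen (m := (n + 1 : ℕ)) isOpen_Ioo (mod_cast le_top)).contDiffAt
      (isOpen_Ioo.mem_nhds ht)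
  rw [← iteratedDeriv_div_const, ← hflux.iteratedDeriv_eq, ← iteratedDeriv_succ',
    iteratedDeriv_succ_id_mul hsmooth, ← iteratedDeriv_succ', ← iteratedDeriv_succ']

theorem mul_abs_iteratedDeriv_le (h : IsRadialProfile ε φ) (hB : HasDerivBounds ε φ K (n + 1))
    (hε : 0 < ε) (hε₁ : ε < 1) (hK : 1 ≤ K) (ht : t ∈ Ioo 0 1) :
    t * |iteratedDeriv (n + 2) φ t| ≤
      3 * (n + 1).factorial * K ^ (n + 1) * (ε ^ 2)⁻¹ * (profileScale ε t ^ n)⁻¹ := by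
  have hscale := profileScale_pos hε ht.1.le
  have hsource : |iteratedDeriv n (fun s => reaction ε s (φ s)) t / 4| ≤
      2 * (n + 1).factorial * K ^ (n + 1) * (ε ^ 2)⁻¹ * (profileScale ε t ^ n)⁻¹ := by
    have hbound := h.abs_iteratedDeriv_reaction_le (hB.of_le n.le_succ) hε hε₁ hK ht
    rw [abs_div, abs_of_pos (zero_lt_four' ℝ), div_le_iff₀ zero_lt_four]
    calc |iteratedDeriv n (fun s => reaction ε s (φ s)) t|
        ≤ 8 * n.factorial * (ε ^ 2)⁻¹ * (K / profileScale ε t) ^ n := hbound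
      _ = 8 * n.factorial * K ^ n * (ε ^ 2)⁻¹ * (profileScale ε t ^ n)⁻¹ := by
        rw [div_pow]
        ring
      _ ≤ 8 * (n + 1).factorial * K ^ (n + 1) * (ε ^ 2)⁻¹ * (profileScale ε t ^ n)⁻¹ := by
        gcongr <;> first | exact hK | exact n.le_succ
      _ = _ := by ring
  have hlower : |(n + 1) * iteratedDeriv (n + 1) φ t| ≤
      (n + 1).factorial * K ^ (n + 1) * (ε ^ 2)⁻¹ * (profileScale ε t ^ n)⁻¹ := by
    rw [abs_mul, abs_of_pos (by positivity)]
    calc (n + 1) * |iteratedDeriv (n + 1) φ t|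
        ≤ (n + 1).factorial * (K / profileScale ε t) ^ (n + 1) := by
          gcongr
          · exact mod_cast (n + 1).self_le_factorial
          · exact hB t ht (n + 1) n.succ_pos le_rfl
      _ = (n + 1).factorial * K ^ (n + 1) * (profileScale ε t)⁻¹ * (profileScale ε t ^ n)⁻¹ := by
        rw [div_pow, pow_succ (profileScale ε t)]
        field_simp
      _ ≤ _ := by
        gcongr
        exact sq_le_profileScale hε ht.1.le
  rw [← abs_of_pos ht.1, ← abs_mul, abs_of_pos ht.1,
    eq_sub_of_add_eq (h.mul_iteratedDeriv_add_eq ht n)]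
  linarith [abs_sub (iteratedDeriv n (fun s => reaction ε s (φ s)) t / 4)
    ((n + 1) * iteratedDeriv (n + 1) φ t)]

theorem abs_iteratedDeriv_le_of_sq_le (h : IsRadialProfile ε φ)
    (hB : HasDerivBounds ε φ K (n + 1)) (hε : 0 < ε) (hε₁ : ε < 1) (hK : 1 ≤ K)
    (ht : t ∈ Ioo 0 1) (hεt : ε ^ 2 ≤ t) :
    |iteratedDeriv (n + 2) φ t| * profileScale ε t ^ (n + 2) ≤
      6 * (n + 1).factorial * K ^ (n + 1) := by
  have hscale := profileScale_pos hε ht.1.le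
  have hsq : profileScale ε t ^ 2 ≤ 2 * ε ^ 2 * t := by
    rw [profileScale_sq ht.1.le]
    nlinarith [sq_pos_of_pos hε]
  calc |iteratedDeriv (n + 2) φ t| * profileScale ε t ^ (n + 2)
      = |iteratedDeriv (n + 2) φ t| * profileScale ε t ^ 2 * profileScale ε t ^ n := by ring
    _ ≤ |iteratedDeriv (n + 2) φ t| * (2 * ε ^ 2 * t) * profileScale ε t ^ n := by gcongr
    _ = 2 * ε ^ 2 * profileScale ε t ^ n * (t * |iteratedDeriv (n + 2) φ t|) := by ring
    _ ≤ 2 * ε ^ 2 * profileScale ε t ^ n *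
        (3 * (n + 1).factorial * K ^ (n + 1) * (ε ^ 2)⁻¹ * (profileScale ε t ^ n)⁻¹) :=
      mul_le_mul_of_nonneg_left (h.mul_abs_iteratedDeriv_le hB hε hε₁ hK ht) (by positivity)
    _ = 6 * (n + 1).factorial * K ^ (n + 1) := by
      field_simp
      ring

theorem tendsto_pow_mul_iteratedDeriv (h : IsRadialProfile ε φ)
    (hB : HasDerivBounds ε φ K (n + 1)) (hε : 0 < ε) (hε₁ : ε < 1) (hK : 1 ≤ K) :
    Tendsto (fun t => t ^ (n + 2) * iteratedDeriv (n + 2) φ t) (𝓝[>] 0) (𝓝 0) := by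
  set V := 3 * (n + 1).factorial * K ^ (n + 1) * (ε ^ 2)⁻¹ * ((ε ^ 2) ^ n)⁻¹
  have hV : Tendsto (fun t : ℝ => t ^ (n + 1) * V) (𝓝[>] 0) (𝓝 0) :=
    tendsto_nhdsWithin_of_tendsto_nhds (Continuous.tendsto' (by fun_prop) _ _ (by simp))
  refine squeeze_zero_norm' ?_ hV
  filter_upwards [Ioo_mem_nhdsGT one_pos] with t ht
  have ht₀ : 0 < t := ht.1
  calc ‖t ^ (n + 2) * iteratedDeriv (n + 2) φ t‖
      = t ^ (n + 1) * (t * |iteratedDeriv (n + 2) φ t|) := by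
        rw [norm_mul, norm_of_nonneg (by positivity), norm_eq_abs]
        ring
    _ ≤ t ^ (n + 1) * V := by
      gcongr
      refine (h.mul_abs_iteratedDeriv_le hB hε hε₁ hK ht).trans ?_
      simp only [V]
      gcongr
      exact sq_le_profileScale hε ht₀.le

-- The recursion says `(t ^ (n + 2) φ^(n+2))' = t ^ (n + 1) (reaction / 4)^(n+1)`.
theorem abs_iteratedDeriv_le_div_sq_pow (h : IsRadialProfile ε φ)
    (hB : HasDerivBounds ε φ K (n + 1)) (hε : 0 < ε) (hε₁ : ε < 1) (hK : 1 ≤ K)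
    (ht : t ∈ Ioo 0 1) :
    |iteratedDeriv (n + 2) φ t| ≤
      2 * (n + 1).factorial * K ^ (n + 1) / (ε ^ 2) ^ (n + 2) := by
  set W := 2 * (n + 1).factorial * K ^ (n + 1) / (ε ^ 2) ^ (n + 2)
  have hflux (s : ℝ) (hs : s ∈ Ioo 0 1) :
      HasDerivAt (fun s => s ^ (n + 1 + 1) * iteratedDeriv (n + 2) φ s)
        (s ^ (n + 1) * (iteratedDeriv (n + 1) (fun s => reaction ε s (φ s)) s / 4)) s := by
    have hiter : HasDerivAt (iteratedDeriv (n + 2) φ) (iteratedDeriv (n + 3) φ s) s :=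
      hasDerivAt_iteratedDeriv (h.contDiffAt hs (n + 3)) (mod_cast Nat.lt_succ_self _)
    refine ((hasDerivAt_pow (n + 1 + 1) s).mul hiter).congr_deriv ?_
    rw [← h.mul_iteratedDeriv_add_eq hs (n + 1), Nat.add_sub_cancel]
    push_cast
    ring
  have hsource (s : ℝ) (hs : s ∈ Ioo 0 1) :
      |iteratedDeriv (n + 1) (fun s => reaction ε s (φ s)) s / 4| ≤ W := by
    have hscale := profileScale_pos hε hs.1.le
    rw [abs_div, abs_of_pos (zero_lt_four' ℝ), div_le_iff₀ zero_lt_four]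
    calc |iteratedDeriv (n + 1) (fun s => reaction ε s (φ s)) s|
        ≤ 8 * (n + 1).factorial * (ε ^ 2)⁻¹ * (K / profileScale ε s) ^ (n + 1) :=
          h.abs_iteratedDeriv_reaction_le hB hε hε₁ hK hs
      _ ≤ 8 * (n + 1).factorial * (ε ^ 2)⁻¹ * (K / ε ^ 2) ^ (n + 1) := by
        gcongr
        exact sq_le_profileScale hε hs.1.le
      _ = W * 4 := by
        rw [div_pow]
        simp only [W]
        field_simp
        ring
  refine (abs_le_div_of_hasDerivAt_pow_mul hflux (h.tendsto_pow_mul_iteratedDeriv hB hε hε₁ hK)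
    hsource t ht).trans (div_le_self (by positivity) ?_)
  push_cast
  linarith [n.cast_nonneg (α := ℝ)]

theorem abs_iteratedDeriv_mul_profileScale_pow_le (h : IsRadialProfile ε φ)
    (hB : HasDerivBounds ε φ K (n + 1)) (hε : 0 < ε) (hε₁ : ε < 1) (hK : 1 ≤ K)
    (ht : t ∈ Ioo 0 1) :
    |iteratedDeriv (n + 2) φ t| * profileScale ε t ^ (n + 2) ≤
      2 ^ (n + 3) * (n + 1).factorial * K ^ (n + 1) := by
  have hscale := profileScale_pos hε ht.1.le
  rcases le_total t (ε ^ 2) with htε | htε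
  · calc |iteratedDeriv (n + 2) φ t| * profileScale ε t ^ (n + 2)
        ≤ 2 * (n + 1).factorial * K ^ (n + 1) / (ε ^ 2) ^ (n + 2) * (2 * ε ^ 2) ^ (n + 2) := by
          gcongr
          · exact h.abs_iteratedDeriv_le_div_sq_pow hB hε hε₁ hK ht
          · exact profileScale_le_two_mul_sq hε ht.1.le htε
      _ = 2 ^ (n + 3) * (n + 1).factorial * K ^ (n + 1) := by
        rw [mul_pow]
        field_simp
        ring
  · refine (h.abs_iteratedDeriv_le_of_sq_le hB hε hε₁ hK ht htε).trans ?_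
    gcongr
    calc (6 : ℝ) ≤ 2 ^ 3 := by norm_num
      _ ≤ 2 ^ (n + 3) := pow_le_pow_right₀ one_le_two (by omega)

theorem hasDerivBounds_one (hε : 0 < ε) (h : IsRadialProfile ε φ) :
    HasDerivBounds ε φ 1 1 := by
  intro t ht j hj hj₁
  obtain rfl : j = 1 := le_antisymm hj₁ hj
  rw [iteratedDeriv_one, pow_one, one_div, abs_of_nonneg (h.deriv_nonneg hε ht)]
  exact h.deriv_le_inv_profileScale hε ht

theorem hasDerivBounds_add_two (h : IsRadialProfile ε φ) (hB : HasDerivBounds ε φ K (n + 1))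
    (hε : 0 < ε) (hε₁ : ε < 1) (hK : 1 ≤ K) {K' : ℝ} (hKK' : K ≤ K')
    (hK' : 2 ^ (n + 3) * (n + 1).factorial * K ^ (n + 1) ≤ K') :
    HasDerivBounds ε φ K' (n + 2) := by
  intro t ht j hj hjn
  have hscale := profileScale_pos hε ht.1.le
  rcases hjn.lt_or_eq with hlt | rfl
  · refine (hB t ht j hj (Nat.lt_succ_iff.1 hlt)).trans ?_
    gcongr
  · rw [div_pow, le_div_iff₀ (by positivity)]
    exact (h.abs_iteratedDeriv_mul_profileScale_pow_le hB hε hε₁ hK ht).trans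
      (hK'.trans (le_self_pow₀ (hK.trans hKK') (by omega)))

theorem exists_hasDerivBounds (n : ℕ) :
    ∃ K : ℝ, 1 ≤ K ∧ ∀ ε φ, 0 < ε → ε < 1 → IsRadialProfile ε φ →
      HasDerivBounds ε φ K (n + 1) := by
  induction n with
  | zero => exact ⟨1, le_rfl, fun ε φ hε _ h => h.hasDerivBounds_one hε⟩
  | succ n ih =>
    obtain ⟨K, hK, hB⟩ := ih
    exact ⟨max K (2 ^ (n + 3) * (n + 1).factorial * K ^ (n + 1)), hK.trans (le_max_left _ _),
      fun ε φ hε hε₁ h => h.hasDerivBounds_add_two (hB ε φ hε hε₁ h) hε hε₁ hK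
        (le_max_left _ _) (le_max_right _ _)⟩

end IsRadialProfile

section NormSq

variable {E : Type*} [NormedAddCommGroup E] [InnerProductSpace ℝ E]

theorem fderiv_norm_sq_eq_smul_innerSL :
    fderiv ℝ (fun y : E => ‖y‖ ^ 2) = ⇑((2 : ℝ) • (innerSL ℝ : E →L[ℝ] E →L[ℝ] ℝ)) := by
  funext y
  rw [(hasStrictFDerivAt_norm_sq y).hasFDerivAt.fderiv, smul_apply, two_smul, two_smul]

theorem mul_norm_iteratedFDeriv_norm_sq_le {A b : ℝ} {x : E} (hA : 0 ≤ A) (hb : 0 ≤ b)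
    (h₁ : 2 * A * ‖x‖ ≤ b) (h₂ : 2 * A ≤ b ^ 2) {i : ℕ} (hi : 1 ≤ i) :
    A * ‖iteratedFDeriv ℝ i (fun y : E => ‖y‖ ^ 2) x‖ ≤ b ^ i := by
  obtain ⟨i, rfl⟩ := Nat.exists_eq_add_of_le' hi
  rw [← norm_iteratedFDeriv_fderiv, fderiv_norm_sq_eq_smul_innerSL]
  rcases i with _ | i
  · rw [norm_iteratedFDeriv_zero, smul_apply, norm_smul, innerSL_apply_norm,
      Real.norm_ofNat, zero_add, pow_one]
    linarith
  have hconst : fderiv ℝ ((2 : ℝ) • (innerSL ℝ : E →L[ℝ] E →L[ℝ] ℝ)) =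
      fun _ => (2 : ℝ) • (innerSL ℝ : E →L[ℝ] E →L[ℝ] ℝ) :=
    funext fun _ => ContinuousLinearMap.fderiv _
  rw [← norm_iteratedFDeriv_fderiv, hconst]
  rcases i with _ | i
  · rw [norm_iteratedFDeriv_zero, norm_smul, Real.norm_ofNat]
    calc A * (2 * ‖(innerSL ℝ : E →L[ℝ] E →L[ℝ] ℝ)‖) ≤ A * (2 * 1) := by
          gcongr
          exact norm_innerSL_le ℝ
      _ ≤ b ^ 2 := by linarith
  · rw [iteratedFDeriv_const_of_ne i.succ_ne_zero, Pi.zero_apply, norm_zero, mul_zero]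
    positivity

end NormSq

theorem tendsto_smul_deriv_comp_sqrt_smul {E F : Type*} [NormedAddCommGroup E] [NormedSpace ℝ E]
    [NormedAddCommGroup F] [NormedSpace ℝ F] {f : E → F} (hf : ContDiffAt ℝ 1 f 0) (v : E) :
    Tendsto (fun t => t • deriv (fun s => f (√s • v)) t) (𝓝[>] 0) (𝓝 0) := by
  have hsqrt : Tendsto (fun t : ℝ => √t) (𝓝[>] 0) (𝓝 0) :=
    (continuous_sqrt.tendsto' 0 0 sqrt_zero).mono_left nhdsWithin_le_nhds
  have hcurve : Tendsto (fun t : ℝ => √t • v) (𝓝[>] 0) (𝓝 0) := by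
    simpa only [zero_smul] using hsqrt.smul_const v
  have hfderiv : Tendsto (fun t : ℝ => fderiv ℝ f (√t • v) v) (𝓝[>] 0) (𝓝 (fderiv ℝ f 0 v)) :=
    (hf.continuousAt_fderiv one_ne_zero |>.clm_apply continuousAt_const).tendsto.comp hcurve
  have hlim := (hsqrt.div_const 2).smul hfderiv
  rw [zero_div, zero_smul] at hlim
  refine hlim.congr' ?_
  filter_upwards [hcurve.eventually (hf.eventually (by simp)), self_mem_nhdsWithin] with t hft ht
  rw [mem_Ioi] at ht
  have hderiv : HasDerivAt (fun s => f (√s • v)) _ t :=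
    (hft.differentiableAt one_ne_zero).hasFDerivAt.comp_hasDerivAt t
      ((hasDerivAt_sqrt ht.ne').smul_const v)
  have hcoeff : √t / 2 = t * (1 / (2 * √t)) := by
    have := sqrt_pos.2 ht
    field_simp
    rw [sq_sqrt ht.le]
  rw [hderiv.deriv, map_smul, smul_smul, hcoeff]

/-- The profile `t ↦ u(√t e₀)` of a radial function `u`, as a function of the squared radius. -/
noncomputable def radialProfile (u : ℝ² → ℝ) (t : ℝ) : ℝ := u (√t • EuclideanSpace.single 0 1)

theorem norm_sqrt_smul_single (t : ℝ) : ‖(√t • EuclideanSpace.single 0 1 : ℝ²)‖ = √t := by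
  simp [norm_smul, abs_of_nonneg (sqrt_nonneg t)]

theorem sqrt_smul_single_mem_ball {t : ℝ} (ht : t < 1) :
    (√t • EuclideanSpace.single 0 1 : ℝ²) ∈ ball 0 1 := by
  rwa [mem_ball_zero_iff, norm_sqrt_smul_single, sqrt_lt' one_pos, one_pow]

namespace IsDirichletSol

variable {ε : ℝ} {u : ℝ² → ℝ} {x : ℝ²}

theorem eq_radialProfile (hε : 0 < ε) (hu : IsDirichletSol ε u) (hx : x ∈ closedBall 0 1) :
    u x = radialProfile u (‖x‖ ^ 2) :=
  hu.eq_of_norm_eq hε hx (by rw [norm_sqrt_smul_single, sqrt_sq (norm_nonneg x)])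

theorem eventuallyEq_radialProfile (hε : 0 < ε) (hu : IsDirichletSol ε u) (hx : x ∈ ball 0 1) :
    u =ᶠ[𝓝 x] fun y => radialProfile u (‖y‖ ^ 2) := by
  filter_upwards [isOpen_ball.mem_nhds hx] with y hy
  exact hu.eq_radialProfile hε (ball_subset_closedBall hy)

theorem contDiffOn_radialProfile (hu : IsDirichletSol ε u) :
    ContDiffOn ℝ ∞ (radialProfile u) (Ioo 0 1) :=
  hu.2.1.comp (fun _ ht => ((contDiffAt_sqrt ht.1.ne').smul contDiffAt_const).contDiffWithinAt)
    fun _ ht => sqrt_smul_single_mem_ball ht.2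

theorem ode_radialProfile (hε : 0 < ε) (hu : IsDirichletSol ε u) {t : ℝ} (ht : t ∈ Ioo 0 1) :
    4 * (t * deriv (deriv (radialProfile u)) t + deriv (radialProfile u) t) =
      reaction ε t (radialProfile u t) := by
  set x : ℝ² := √t • EuclideanSpace.single 0 1
  have hx : x ∈ ball 0 1 := sqrt_smul_single_mem_ball ht.2
  have hxt : ‖x‖ ^ 2 = t := by rw [norm_sqrt_smul_single, sq_sqrt ht.1.le]
  have hsmooth : ContDiffAt ℝ 2 (radialProfile u) (‖x‖ ^ 2) := by
    rw [hxt]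
    exact mod_cast contDiffAt_infty.1
      (hu.contDiffOn_radialProfile.contDiffAt (isOpen_Ioo.mem_nhds ht)) 2
  have hlaplacian := hu.laplacian_eq hx
  rw [(laplacian_congr_nhds (hu.eventuallyEq_radialProfile hε hx)).eq_of_nhds,
    laplacian_comp_norm_sq hsmooth, hxt, finrank_euclideanSpace_fin] at hlaplacian
  push_cast at hlaplacian
  rw [radialProfile, ← hlaplacian]
  ring

theorem isRadialProfile (hε : 0 < ε) (hu : IsDirichletSol ε u) :
    IsRadialProfile ε (radialProfile u) where
  contDiffOn := hu.contDiffOn_radialProfile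
  nonpos t ht := hu.nonpos hε (ball_subset_closedBall (sqrt_smul_single_mem_ball ht.2))
  log_le t ht := by
    have hne : (√t • EuclideanSpace.single 0 1 : ℝ²) ≠ 0 := by
      rw [← norm_pos_iff, norm_sqrt_smul_single]
      exact sqrt_pos.2 ht.1
    simpa only [norm_sqrt_smul_single, log_sqrt ht.1.le, radialProfile] using
      hu.log_norm_le hε (ball_subset_closedBall (sqrt_smul_single_mem_ball ht.2)) hne
  ode _ ht := hu.ode_radialProfile hε ht
  tendsto := tendsto_smul_deriv_comp_sqrt_smul
    (mod_cast contDiffAt_infty.1 (hu.contDiffAt (mem_ball_self one_pos)) 1) _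

end IsDirichletSol

theorem HasDerivBounds.norm_iteratedFDeriv_comp_norm_sq_le {E : Type*} [NormedAddCommGroup E]
    [InnerProductSpace ℝ E] {ε K : ℝ} {φ : ℝ → ℝ} {n : ℕ} {x : E} (hε : 0 < ε) (hε₁ : ε < 1)
    (hK : 1 ≤ K) (hφ : IsRadialProfile ε φ) (hbound : HasDerivBounds ε φ K n)
    (hx : ‖x‖ ^ 2 ∈ Ioo (0 : ℝ) 1) :
    ‖iteratedFDeriv ℝ n (fun y : E => φ (‖y‖ ^ 2)) x‖ ≤
      n.factorial * (ε ^ 2)⁻¹ * (2 * K / ε) ^ n := by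
  set A := K / profileScale ε (‖x‖ ^ 2)
  have hscale : 0 < profileScale ε (‖x‖ ^ 2) := profileScale_pos hε hx.1.le
  have hA : 0 < A := by positivity
  have hlinear : 2 * A * ‖x‖ ≤ 2 * K / ε := by
    rw [← mul_div_assoc, div_mul_eq_mul_div, div_le_div_iff₀ hscale hε]
    have := mul_le_profileScale hε ‖x‖
    nlinarith
  have hconst : 2 * A ≤ (2 * K / ε) ^ 2 := by
    have hK₂ : 2 * K ≤ (2 * K) ^ 2 := le_self_pow₀ (by linarith) two_ne_zero
    rw [← mul_div_assoc, div_pow]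
    exact div_le_div₀ (by positivity) hK₂ (by positivity) (sq_le_profileScale hε hx.1.le)
  have hderiv (i : ℕ) (hi : i ≤ n) : ‖iteratedDeriv i φ (‖x‖ ^ 2)‖ ≤ (ε ^ 2)⁻¹ * A ^ i := by
    rcases Nat.eq_zero_or_pos i with rfl | hi₀
    · simpa using hφ.abs_le hε hε₁ hx
    · refine (hbound _ hx i hi₀ hi).trans (le_mul_of_one_le_left (by positivity) ?_)
      exact (one_le_inv₀ (by positivity)).2 (pow_le_one₀ hε.le hε₁.le)
  exact norm_iteratedFDeriv_comp_le_of_scaling (f := fun y : E => ‖y‖ ^ 2) (hφ.contDiffAt hx n)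
    (contDiff_norm_sq ℝ).contDiffAt hA hderiv fun i hi _ =>
    mul_norm_iteratedFDeriv_norm_sq_le hA.le (by positivity) hlinear hconst hi

namespace IsDirichletSol

variable {ε K : ℝ} {u : ℝ² → ℝ} {x : ℝ²} {n : ℕ}

theorem norm_iteratedFDeriv_le_of_ne_zero (hε : 0 < ε) (hε₁ : ε < 1) (hK : 1 ≤ K)
    (hu : IsDirichletSol ε u) (hbound : HasDerivBounds ε (radialProfile u) K n)
    (hx : x ∈ ball 0 1) (hx₀ : x ≠ 0) :
    ‖iteratedFDeriv ℝ n u x‖ ≤ n.factorial * (ε ^ 2)⁻¹ * (2 * K / ε) ^ n := by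
  rw [((hu.eventuallyEq_radialProfile hε hx).iteratedFDeriv ℝ n).eq_of_nhds]
  refine hbound.norm_iteratedFDeriv_comp_norm_sq_le hε hε₁ hK (hu.isRadialProfile hε) ⟨?_, ?_⟩
  · exact pow_pos (norm_pos_iff.2 hx₀) 2
  · exact pow_lt_one₀ (norm_nonneg x) (mem_ball_zero_iff.1 hx) two_ne_zero

theorem norm_iteratedFDeriv_le (hε : 0 < ε) (hε₁ : ε < 1) (hK : 1 ≤ K)
    (hu : IsDirichletSol ε u) (hbound : HasDerivBounds ε (radialProfile u) K n)
    (hx : x ∈ ball 0 1) :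
    ‖iteratedFDeriv ℝ n u x‖ ≤ n.factorial * (ε ^ 2)⁻¹ * (2 * K / ε) ^ n := by
  rcases eq_or_ne x 0 with rfl | hx₀
  · have hcont : ContinuousAt (iteratedFDeriv ℝ n u) 0 :=
      (hu.contDiffAt hx).continuousAt_iteratedFDeriv (mod_cast le_top)
    refine le_of_tendsto (hcont.norm.tendsto.mono_left (nhdsWithin_le_nhds (s := {0}ᶜ))) ?_
    filter_upwards [mem_nhdsWithin_of_mem_nhds (isOpen_ball.mem_nhds hx), self_mem_nhdsWithin]
      with y hy hy₀ using hu.norm_iteratedFDeriv_le_of_ne_zero hε hε₁ hK hbound hy hy₀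
  · exact hu.norm_iteratedFDeriv_le_of_ne_zero hε hε₁ hK hbound hx hx₀

end IsDirichletSol

theorem factorial_mul_inv_sq_mul_pow_le {ε K : ℝ} {i k : ℕ} (hε : 0 < ε) (hε₁ : ε < 1)
    (hK : 1 ≤ K) (hik : i ≤ k) :
    i.factorial * (ε ^ 2)⁻¹ * (2 * K / ε) ^ i ≤
      k.factorial * (2 * K) ^ k * ε ^ (-(k : ℤ) - 2) := by
  have hbase : 1 ≤ 2 * K / ε := (one_le_div hε).2 (by linarith)
  have hpow : ε ^ (-(k : ℤ) - 2) = (ε ^ 2)⁻¹ * (ε ^ k)⁻¹ := by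
    rw [sub_eq_neg_add, zpow_add₀ hε.ne', zpow_neg, zpow_neg, zpow_natCast, zpow_ofNat]
  calc i.factorial * (ε ^ 2)⁻¹ * (2 * K / ε) ^ i
      ≤ k.factorial * (ε ^ 2)⁻¹ * (2 * K / ε) ^ k := by gcongr
    _ = k.factorial * (2 * K) ^ k * ε ^ (-(k : ℤ) - 2) := by
      rw [hpow, div_pow]
      ring

/-- for every `0 < R ≤ 1` and every integer `k ≥ 0` there is a constant
`C = C(R,k)` such that for all sufficiently small `ε > 0`, the `C^k` norm of `ū_ε` on
`B_R(0)` is at most `C·ε^{−k−2}`. -/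
theorem stmt_12 (R : ℝ) (hR : 0 < R) (hR1 : R ≤ 1) (k : ℕ) :
    ∃ C : ℝ, ∃ ε₀ > 0, ∀ ε : ℝ, 0 < ε → ε < ε₀ →
      ∀ u : EuclideanSpace ℝ (Fin 2) → ℝ, IsDirichletSol ε u →
        ∀ i ≤ k, ∀ x ∈ ball (0 : EuclideanSpace ℝ (Fin 2)) R,
          ‖iteratedFDeriv ℝ i u x‖ ≤ C * ε ^ (-(k : ℤ) - 2) := by
  obtain ⟨K, hK, hbounds⟩ := IsRadialProfile.exists_hasDerivBounds k
  refine ⟨k.factorial * (2 * K) ^ k, 1, one_pos, fun ε hε hε₁ u hu i hi x hx => ?_⟩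
  have hbound : HasDerivBounds ε (radialProfile u) K i :=
    (hbounds ε _ hε hε₁ (hu.isRadialProfile hε)).of_le (by lia)
  exact (hu.norm_iteratedFDeriv_le hε hε₁ hK hbound (ball_subset_ball hR1 hx)).trans
    (factorial_mul_inv_sq_mul_pow_le hε hε₁ hK hi)
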